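/- arXiv:math/0302245 — 2 statements merged into one kernel-verified Lean document; each statement's English description precedes it below -/
import Mathlib

section
/- Let H = ⟨Y|S⟩ be a finitely presented group and ψ > 1, ω > 0 real parameters. Then the 1-skeleton Γ⁽¹⁾_H̃ of the cusp complex of H is a δ-hyperbolic metric space, with δ = 4ωψ + (log_ψ(2) + 2)·ω·log(ψ): every geodesic triangle is δ-thin, i.e. each side lies in the δ-neighborhood of the union of the other two sides. -/
/-!
STATEMENT 8: For a finitely presented group `H = ⟨Y|S⟩` and parameters `ψ > 1, ω > 0`,
the 1-skeleton of the cusp complex of `H` (vertex set `H × ℕ`; horizontal edges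
`(h,i) — (hy,i)` of length `ψ^{-i}` for `y ∈ Y`; vertical edges `(h,i) — (h,i+1)` of
length `ω log ψ`; induced path metric) is δ-hyperbolic with
`δ = 4ωψ + (log_ψ 2 + 2) ω log ψ`: every geodesic triangle is δ-thin.
-/

open Set

variable {H : Type*} [Group H]

/-- Horizontal adjacency in the cusp complex. -/
def Horiz (Y : Set H) (u v : H × ℕ) : Prop :=
  u.2 = v.2 ∧ ∃ y : H, (y ∈ Y ∨ y⁻¹ ∈ Y) ∧ v.1 = u.1 * y

/-- Vertical adjacency in the cusp complex. -/
def Vert (u v : H × ℕ) : Prop :=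
  u.1 = v.1 ∧ (v.2 = u.2 + 1 ∨ u.2 = v.2 + 1)

/-- Adjacency in the 1-skeleton of the cusp complex. -/
def CuspAdj (Y : Set H) (u v : H × ℕ) : Prop := Horiz Y u v ∨ Vert u v

/-- Length of an edge of the cusp complex: horizontal edges at depth `i` have length
`ψ^{-i}`, vertical edges have length `ω log ψ`. -/
noncomputable def stepLen (ψ ω : ℝ) (u v : H × ℕ) : ℝ :=
  if u.2 = v.2 then ψ ^ (-(u.2 : ℝ)) else ω * Real.log ψ

/-- `p` is an edge path of combinatorial length `n` in the cusp complex. -/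
def IsPathOn (Y : Set H) (p : ℕ → H × ℕ) (n : ℕ) : Prop :=
  ∀ k < n, CuspAdj Y (p k) (p (k + 1))

/-- Metric length of the edge path `p` (with `n` edges). -/
noncomputable def pathLen (ψ ω : ℝ) (p : ℕ → H × ℕ) (n : ℕ) : ℝ :=
  ∑ k ∈ Finset.range n, stepLen ψ ω (p k) (p (k + 1))

/-- The induced path metric on the 1-skeleton of the cusp complex. -/
noncomputable def cuspDist (Y : Set H) (ψ ω : ℝ) (u v : H × ℕ) : ℝ :=
  sInf {c | ∃ (n : ℕ) (p : ℕ → H × ℕ),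
    IsPathOn Y p n ∧ p 0 = u ∧ p n = v ∧ c = pathLen ψ ω p n}

/-- A geodesic edge path: an edge path realizing the path metric between its
endpoints. -/
def IsGeodesicPath (Y : Set H) (ψ ω : ℝ) (p : ℕ → H × ℕ) (n : ℕ) : Prop :=
  IsPathOn Y p n ∧ pathLen ψ ω p n = cuspDist Y ψ ω (p 0) (p n)

/-- Every vertex of the path `(p, n)` is within distance `δ` of a vertex of one of the
paths `(q, m)`, `(r, l)`. -/
noncomputable def SideThin (Y : Set H) (ψ ω δ : ℝ) (p : ℕ → H × ℕ) (n : ℕ)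
    (q : ℕ → H × ℕ) (m : ℕ) (r : ℕ → H × ℕ) (l : ℕ) : Prop :=
  ∀ k ≤ n, ∃ j : ℕ, (j ≤ m ∧ cuspDist Y ψ ω (p k) (q j) ≤ δ) ∨
    (j ≤ l ∧ cuspDist Y ψ ω (p k) (r j) ≤ δ)

/-- Word length. -/
noncomputable def wl (Y : Set H) (g : H) : ℕ :=
  sInf {n | ∃ l : List H, (∀ y ∈ l, y ∈ Y ∨ y⁻¹ ∈ Y) ∧ l.prod = g ∧ l.length = n}

lemma wl_le (Y : Set H) (l : List H) (hl : ∀ y ∈ l, y ∈ Y ∨ y⁻¹ ∈ Y) :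
    wl Y l.prod ≤ l.length := Nat.sInf_le ⟨l, hl, rfl, rfl⟩

lemma wl_spec {Y : Set H} (hY : Subgroup.closure Y = ⊤) (g : H) :
    ∃ l : List H, (∀ y ∈ l, y ∈ Y ∨ y⁻¹ ∈ Y) ∧ l.prod = g ∧ l.length = wl Y g := by
  have hne : {n | ∃ l : List H, (∀ y ∈ l, y ∈ Y ∨ y⁻¹ ∈ Y) ∧ l.prod = g ∧ l.length = n}.Nonempty := by
    have hg : g ∈ Submonoid.closure (Y ∪ Y⁻¹) := by
      rw [← Subgroup.closure_toSubmonoid, hY]; trivial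
    obtain ⟨l, hl, h⟩ := Submonoid.exists_list_of_mem_closure hg
    exact ⟨l.length, l, hl, h, rfl⟩
  exact Nat.sInf_mem hne

/-- Word metric. -/
noncomputable def wd (Y : Set H) (g h : H) : ℕ := wl Y (g⁻¹ * h)

lemma wd_self (Y : Set H) (g : H) : wd Y g g = 0 := by
  have := wl_le Y [] (by simp)
  simpa [wd] using this

lemma wd_gen (Y : Set H) (g y : H) (hy : y ∈ Y ∨ y⁻¹ ∈ Y) : wd Y g (g * y) ≤ 1 := by
  have := wl_le Y [y] (by simpa using hy)
  simpa [wd] using this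

lemma wd_tri {Y : Set H} (hY : Subgroup.closure Y = ⊤) (g h k : H) :
    wd Y g k ≤ wd Y g h + wd Y h k := by
  obtain ⟨l, hl, h1, h2⟩ := wl_spec hY (g⁻¹ * h)
  obtain ⟨l', hl', h1', h2'⟩ := wl_spec hY (h⁻¹ * k)
  have := wl_le Y (l ++ l') (by
    intro y hy; rcases List.mem_append.1 hy with h | h
    · exact hl y h
    · exact hl' y h)
  rw [List.prod_append, h1, h1', List.length_append, h2, h2'] at this
  unfold wd
  convert this using 2
  group

lemma wl_inv_le {Y : Set H} (hY : Subgroup.closure Y = ⊤) (g : H) : wl Y g⁻¹ ≤ wl Y g := by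
  obtain ⟨l, hl, h1, h2⟩ := wl_spec hY g
  have := wl_le Y (l.map (·⁻¹)).reverse (by
    intro y hy
    simp only [List.mem_reverse, List.mem_map] at hy
    obtain ⟨z, hz, rfl⟩ := hy
    rw [inv_inv]; exact (hl z hz).symm)
  rw [← List.prod_inv_reverse, h1, List.length_reverse, List.length_map, h2] at this
  exact this

lemma wd_comm {Y : Set H} (hY : Subgroup.closure Y = ⊤) (g h : H) : wd Y g h = wd Y h g := by
  have key : ∀ g h : H, wd Y g h ≤ wd Y h g := by
    intro g h
    have := wl_inv_le hY (h⁻¹ * g)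
    simpa [wd] using this
  exact le_antisymm (key _ _) (key _ _)

/-- There is an edge path of length `c`. -/
def Reach (Y : Set H) (ψ ω : ℝ) (u v : H × ℕ) (c : ℝ) : Prop :=
  ∃ (n : ℕ) (p : ℕ → H × ℕ), IsPathOn Y p n ∧ p 0 = u ∧ p n = v ∧ c = pathLen ψ ω p n

lemma stepLen_nonneg {ψ ω : ℝ} (hψ : 1 < ψ) (hω : 0 < ω) (u v : H × ℕ) :
    0 ≤ stepLen ψ ω u v := by
  unfold stepLen
  have := Real.log_pos hψ
  split_ifs <;> positivity

lemma stepLen_h {ψ ω : ℝ} (hψ : 1 < ψ) {u v : H × ℕ} (h : u.2 = v.2) :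
    stepLen ψ ω u v = (ψ ^ u.2)⁻¹ := by
  rw [stepLen, if_pos h, Real.rpow_neg (by linarith), Real.rpow_natCast]

lemma stepLen_v {ψ ω : ℝ} {u v : H × ℕ} (h : u.2 ≠ v.2) :
    stepLen ψ ω u v = ω * Real.log ψ := by
  rw [stepLen, if_neg h]

lemma cuspDist_le_of_reach {Y : Set H} {ψ ω : ℝ} (hψ : 1 < ψ) (hω : 0 < ω) {u v : H × ℕ} {c : ℝ}
    (h : Reach Y ψ ω u v c) : cuspDist Y ψ ω u v ≤ c := by
  refine csInf_le ⟨0, ?_⟩ h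
  rintro _ ⟨n, p, _, _, _, rfl⟩
  exact Finset.sum_nonneg fun _ _ => stepLen_nonneg hψ hω _ _

lemma Reach.refl (Y : Set H) (ψ ω : ℝ) (u : H × ℕ) : Reach Y ψ ω u u 0 :=
  ⟨0, fun _ => u, fun k hk => absurd hk (by omega), rfl, rfl, by simp [pathLen]⟩

lemma Reach.snoc {Y : Set H} {ψ ω : ℝ} {u v w : H × ℕ} {c : ℝ} (h : Reach Y ψ ω u v c)
    (hvw : CuspAdj Y v w) : Reach Y ψ ω u w (c + stepLen ψ ω v w) := by
  obtain ⟨n, p, hp, h0, hn, rfl⟩ := h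
  refine ⟨n + 1, fun k => if k ≤ n then p k else w, ?_, by simpa using h0, by simp, ?_⟩
  · intro k hk
    by_cases hkn : k < n
    · have h1 : k ≤ n := by omega
      have h2 : k + 1 ≤ n := by omega
      simpa only [h1, h2, if_true] using hp k hkn
    · have : k = n := by omega
      subst this
      simpa [hn] using hvw
  · unfold pathLen
    rw [Finset.sum_range_succ]
    congr 1
    · refine Finset.sum_congr rfl fun k hk => ?_
      have hk := Finset.mem_range.1 hk
      have h1 : k ≤ n := by omega
      have h2 : k + 1 ≤ n := by omega
      simp only [h1, h2, if_true]
    · simp [hn]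

lemma Reach.up {Y : Set H} {ψ ω : ℝ} {u : H × ℕ} {h : H} {i : ℕ} {c : ℝ}
    (hr : Reach Y ψ ω u (h, i) c) (d : ℕ) :
    Reach Y ψ ω u (h, i + d) (c + d * (ω * Real.log ψ)) := by
  induction d with
  | zero => simpa using hr
  | succ d ih =>
    have := ih.snoc (w := (h, i + (d + 1))) (Or.inr ⟨rfl, Or.inl rfl⟩)
    rw [stepLen_v (by simp)] at this
    convert this using 1
    push_cast; ring

lemma Reach.down {Y : Set H} {ψ ω : ℝ} {u : H × ℕ} {h : H} {i : ℕ} {c : ℝ} (d : ℕ)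
    (hr : Reach Y ψ ω u (h, i + d) c) :
    Reach Y ψ ω u (h, i) (c + d * (ω * Real.log ψ)) := by
  induction d generalizing c with
  | zero => simpa using hr
  | succ d ih =>
    have := hr.snoc (w := (h, i + d)) (Or.inr ⟨rfl, Or.inr rfl⟩)
    rw [stepLen_v (by simp)] at this
    convert ih this using 1
    push_cast; ring

lemma Reach.list {Y : Set H} {ψ ω : ℝ} (hψ : 1 < ψ) {u : H × ℕ} {i : ℕ} (l : List H)
    (hl : ∀ y ∈ l, y ∈ Y ∨ y⁻¹ ∈ Y) {h : H} {c : ℝ} (hr : Reach Y ψ ω u (h, i) c) :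
    Reach Y ψ ω u (h * l.prod, i) (c + l.length * (ψ ^ i)⁻¹) := by
  induction l generalizing h c with
  | nil => simpa using hr
  | cons y l ih =>
    have := hr.snoc (w := (h * y, i)) (Or.inl ⟨rfl, y, hl y (by simp), rfl⟩)
    rw [stepLen_h (u := (h, i)) (v := (h * y, i)) hψ rfl] at this
    have := ih (fun z hz => hl z (by simp [hz])) this
    convert this using 1
    · simp [mul_assoc]
    · simp only [List.length_cons]; push_cast; ring

lemma Reach.horiz {Y : Set H} (hY : Subgroup.closure Y = ⊤) {ψ ω : ℝ} (hψ : 1 < ψ) {u : H × ℕ}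
    {i : ℕ} {h : H} {c : ℝ} (hr : Reach Y ψ ω u (h, i) c) (h' : H) :
    Reach Y ψ ω u (h', i) (c + wd Y h h' * (ψ ^ i)⁻¹) := by
  obtain ⟨l, hl, h1, h2⟩ := wl_spec hY (h⁻¹ * h')
  have := hr.list hψ l hl
  rw [h1, h2, mul_inv_cancel_left] at this
  exact this

lemma competitor {Y : Set H} (hY : Subgroup.closure Y = ⊤) {ψ ω : ℝ} (hψ : 1 < ψ) (hω : 0 < ω)
    (u v : H × ℕ) (m : ℕ) (hu : u.2 ≤ m) (hv : v.2 ≤ m) :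
    cuspDist Y ψ ω u v ≤ ω * Real.log ψ * (2 * m - u.2 - v.2) + wd Y u.1 v.1 * (ψ ^ m)⁻¹ := by
  obtain ⟨a, i⟩ := u
  obtain ⟨b, j⟩ := v
  simp only at hu hv ⊢
  obtain ⟨d, rfl⟩ := Nat.exists_eq_add_of_le hu
  obtain ⟨e, he⟩ := Nat.exists_eq_add_of_le hv
  have h1 := ((Reach.refl Y ψ ω (a, i)).up d).horiz hY hψ b
  have h2 : Reach Y ψ ω (a, i) (b, j + e) _ := he ▸ h1
  have h3 := h2.down e
  refine (cuspDist_le_of_reach hψ hω h3).trans (le_of_eq ?_)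
  have : (i : ℝ) + d = j + e := by exact_mod_cast he
  rw [he]
  push_cast
  linear_combination (ω * Real.log ψ) * this

lemma seg {Y : Set H} (hY : Subgroup.closure Y = ⊤) {ψ ω : ℝ} (hψ : 1 < ψ) (hω : 0 < ω)
    {p : ℕ → H × ℕ} {n m : ℕ} (hp : IsPathOn Y p n) (hm : ∀ k ≤ n, (p k).2 ≤ m)
    {k l : ℕ} (hkl : k ≤ l) (hl : l ≤ n) :
    pathLen ψ ω p k + ω * Real.log ψ * |((p l).2 : ℝ) - (p k).2|
      + wd Y (p k).1 (p l).1 * (ψ ^ m)⁻¹ ≤ pathLen ψ ω p l := by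
  have hlog := Real.log_pos hψ
  have hlam : 0 < ω * Real.log ψ := by positivity
  have hpm : 0 < (ψ ^ m)⁻¹ := by positivity
  induction l, hkl using Nat.le_induction with
  | base => simp [wd_self]
  | succ l hkl ih =>
    have ih := ih (by omega)
    have hs : pathLen ψ ω p (l + 1) = pathLen ψ ω p l + stepLen ψ ω (p l) (p (l + 1)) := by
      unfold pathLen; rw [Finset.sum_range_succ]
    have ht : (wd Y (p k).1 (p (l + 1)).1 : ℝ) ≤ wd Y (p k).1 (p l).1 + wd Y (p l).1 (p (l + 1)).1 := by
      exact_mod_cast wd_tri hY _ _ _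
    have hstep : ω * Real.log ψ * |((p (l + 1)).2 : ℝ) - (p l).2|
        + wd Y (p l).1 (p (l + 1)).1 * (ψ ^ m)⁻¹ ≤ stepLen ψ ω (p l) (p (l + 1)) := by
      rcases hp l (by omega) with ⟨h1, y, hy, h2⟩ | ⟨h1, h2⟩
      · rw [stepLen_h hψ h1, ← h1, h2]
        have h3 : (wd Y (p l).1 ((p l).1 * y) : ℝ) ≤ 1 := by exact_mod_cast wd_gen Y _ y hy
        have h4 : (ψ ^ m)⁻¹ ≤ (ψ ^ (p l).2)⁻¹ :=
          inv_anti₀ (by positivity) (pow_le_pow_right₀ hψ.le (hm l (by omega)))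
        simp only [sub_self, abs_zero, mul_zero, zero_add]
        nlinarith
      · rw [stepLen_v (by omega), ← h1, wd_self]
        rcases h2 with h2 | h2 <;> rw [h2] <;> push_cast <;> simp
    have habs := abs_sub_le ((p (l + 1)).2 : ℝ) (p l).2 (p k).2
    nlinarith

section PreLemmas

variable {Y : Set H} {ψ ω : ℝ} {p : ℕ → H × ℕ} {n m K : ℕ}

lemma noHoriz (hY : Subgroup.closure Y = ⊤) (hψ : 1 < ψ) (hω : 0 < ω)
    (hp : IsPathOn Y p n) (hm : ∀ k ≤ n, (p k).2 ≤ m) (hK : K ≤ n) (hKm : (p K).2 = m)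
    (hlen : pathLen ψ ω p n ≤ ω * Real.log ψ * (2 * m - (p 0).2 - (p n).2)
      + wd Y (p 0).1 (p n).1 * (ψ ^ m)⁻¹)
    (s : ℕ) (hs : s < K) (hh : Horiz Y (p s) (p (s + 1))) : (p s).2 = m := by
  by_contra hne
  have hlt : (p s).2 < m := lt_of_le_of_ne (hm s (by omega)) hne
  have hlog := Real.log_pos hψ
  have hlam : 0 < ω * Real.log ψ := by positivity
  have hpm : 0 < (ψ ^ m)⁻¹ := by positivity
  have hs' : pathLen ψ ω p (s + 1) = pathLen ψ ω p s + stepLen ψ ω (p s) (p (s + 1)) := by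
    unfold pathLen; rw [Finset.sum_range_succ]
  obtain ⟨h1, y, hy, h2⟩ := hh
  rw [stepLen_h hψ h1] at hs'
  have h4 : (ψ ^ m)⁻¹ < (ψ ^ (p s).2)⁻¹ :=
    inv_strictAnti₀ (by positivity) (pow_lt_pow_right₀ hψ hlt)
  have h3 : (wd Y (p s).1 (p (s + 1)).1 : ℝ) ≤ 1 := by
    rw [h2]; exact_mod_cast wd_gen Y _ y hy
  have e1 := seg hY hψ hω hp hm (Nat.zero_le s) (by omega)
  have e2 := seg hY hψ hω hp hm (show s + 1 ≤ K by omega) hK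
  have e3 := seg hY hψ hω hp hm hK le_rfl
  have t1 : (wd Y (p 0).1 (p n).1 : ℝ) ≤ wd Y (p 0).1 (p s).1 + wd Y (p s).1 (p (s + 1)).1
      + wd Y (p (s + 1)).1 (p K).1 + wd Y (p K).1 (p n).1 := by
    have a1 := wd_tri hY (p 0).1 (p s).1 (p n).1
    have a2 := wd_tri hY (p s).1 (p (s + 1)).1 (p n).1
    have a3 := wd_tri hY (p (s + 1)).1 (p K).1 (p n).1
    exact_mod_cast (by omega)
  have h0 : pathLen ψ ω p 0 = 0 := by simp [pathLen]
  rw [h0] at e1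
  have b1 := le_abs_self (((p s).2 : ℝ) - (p 0).2)
  have b2 := le_abs_self (((p K).2 : ℝ) - (p (s + 1)).2)
  have b3 := neg_le_abs (((p n).2 : ℝ) - (p K).2)
  have hKm' : ((p K).2 : ℝ) = m := by exact_mod_cast hKm
  have h1' : ((p s).2 : ℝ) = (p (s + 1)).2 := by exact_mod_cast h1
  have b := mul_le_mul_of_nonneg_left
    (show (2 * m - (p 0).2 - (p n).2 : ℝ) ≤ |((p s).2 : ℝ) - (p 0).2|
      + |((p K).2 : ℝ) - (p (s + 1)).2| + |((p n).2 : ℝ) - (p K).2| by linarith) hlam.le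
  have t2 := mul_le_mul_of_nonneg_right t1 hpm.le
  have t3 := mul_le_mul_of_nonneg_right h3 hpm.le
  linarith

lemma mono_pre (hY : Subgroup.closure Y = ⊤) (hψ : 1 < ψ) (hω : 0 < ω)
    (hp : IsPathOn Y p n) (hm : ∀ k ≤ n, (p k).2 ≤ m) (hK : K ≤ n) (hKm : (p K).2 = m)
    (hlen : pathLen ψ ω p n ≤ ω * Real.log ψ * (2 * m - (p 0).2 - (p n).2)
      + wd Y (p 0).1 (p n).1 * (ψ ^ m)⁻¹)
    (k l : ℕ) (hkl : k ≤ l) (hl : l ≤ K) : (p k).2 ≤ (p l).2 := by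
  by_contra! hlt
  have hlog := Real.log_pos hψ
  have hlam : 0 < ω * Real.log ψ := by positivity
  have hpm : 0 < (ψ ^ m)⁻¹ := by positivity
  have e1 := seg hY hψ hω hp hm (Nat.zero_le k) (by omega)
  have e2 := seg hY hψ hω hp hm hkl (by omega)
  have e3 := seg hY hψ hω hp hm hl hK
  have e4 := seg hY hψ hω hp hm hK le_rfl
  have t1 : (wd Y (p 0).1 (p n).1 : ℝ) ≤ wd Y (p 0).1 (p k).1 + wd Y (p k).1 (p l).1
      + wd Y (p l).1 (p K).1 + wd Y (p K).1 (p n).1 := by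
    have a1 := wd_tri hY (p 0).1 (p k).1 (p n).1
    have a2 := wd_tri hY (p k).1 (p l).1 (p n).1
    have a3 := wd_tri hY (p l).1 (p K).1 (p n).1
    exact_mod_cast (by omega)
  have h0 : pathLen ψ ω p 0 = 0 := by simp [pathLen]
  rw [h0] at e1
  have b1 := le_abs_self (((p k).2 : ℝ) - (p 0).2)
  have b2 := abs_nonneg (((p l).2 : ℝ) - (p k).2)
  have b3 := le_abs_self (((p K).2 : ℝ) - (p l).2)
  have b4 := neg_le_abs (((p n).2 : ℝ) - (p K).2)
  have hKm' : ((p K).2 : ℝ) = m := by exact_mod_cast hKm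
  have h1' : ((p l).2 : ℝ) < (p k).2 := by exact_mod_cast hlt
  have b := mul_lt_mul_of_pos_left
    (show (2 * m - (p 0).2 - (p n).2 : ℝ) < |((p k).2 : ℝ) - (p 0).2|
      + |((p l).2 : ℝ) - (p k).2| + |((p K).2 : ℝ) - (p l).2|
      + |((p n).2 : ℝ) - (p K).2| by linarith) hlam
  have t2 := mul_le_mul_of_nonneg_right t1 hpm.le
  linarith

lemma dist_pre (hY : Subgroup.closure Y = ⊤) (hψ : 1 < ψ) (hω : 0 < ω)
    (hp : IsPathOn Y p n) (hm : ∀ k ≤ n, (p k).2 ≤ m) (hK : K ≤ n) (hKm : (p K).2 = m)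
    (hlen : pathLen ψ ω p n ≤ ω * Real.log ψ * (2 * m - (p 0).2 - (p n).2)
      + wd Y (p 0).1 (p n).1 * (ψ ^ m)⁻¹)
    (k : ℕ) (hk : k ≤ K) : wd Y (p 0).1 (p k).1 + wd Y (p k).1 (p n).1 ≤ wd Y (p 0).1 (p n).1 := by
  have hlog := Real.log_pos hψ
  have hlam : 0 < ω * Real.log ψ := by positivity
  have hpm : 0 < (ψ ^ m)⁻¹ := by positivity
  have e1 := seg hY hψ hω hp hm (Nat.zero_le k) (by omega)
  have e3 := seg hY hψ hω hp hm hk hK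
  have e4 := seg hY hψ hω hp hm hK le_rfl
  have t1 : (wd Y (p k).1 (p n).1 : ℝ) ≤ 
      wd Y (p k).1 (p K).1 + wd Y (p K).1 (p n).1 := by
    have a3 := wd_tri hY (p k).1 (p K).1 (p n).1
    exact_mod_cast (by omega)
  have h0 : pathLen ψ ω p 0 = 0 := by simp [pathLen]
  rw [h0] at e1
  have b1 := le_abs_self (((p k).2 : ℝ) - (p 0).2)
  have b3 := le_abs_self (((p K).2 : ℝ) - (p k).2)
  have b4 := neg_le_abs (((p n).2 : ℝ) - (p K).2)
  have hKm' : ((p K).2 : ℝ) = m := by exact_mod_cast hKm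
  have b := mul_le_mul_of_nonneg_left
    (show (2 * m - (p 0).2 - (p n).2 : ℝ) ≤ |((p k).2 : ℝ) - (p 0).2|
      + |((p K).2 : ℝ) - (p k).2|
      + |((p n).2 : ℝ) - (p K).2| by linarith) hlam.le
  have t2 := mul_le_mul_of_nonneg_right t1 hpm.le
  have : ((wd Y (p 0).1 (p k).1 : ℝ) + wd Y (p k).1 (p n).1) * (ψ ^ m)⁻¹
      ≤ wd Y (p 0).1 (p n).1 * (ψ ^ m)⁻¹ := by linarith
  have := le_of_mul_le_mul_right this hpm
  exact_mod_cast this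

lemma vert_pre (hY : Subgroup.closure Y = ⊤) (hψ : 1 < ψ) (hω : 0 < ω)
    (hp : IsPathOn Y p n) (hm : ∀ k ≤ n, (p k).2 ≤ m) (hK : K ≤ n) (hKm : (p K).2 = m)
    (hlen : pathLen ψ ω p n ≤ ω * Real.log ψ * (2 * m - (p 0).2 - (p n).2)
      + wd Y (p 0).1 (p n).1 * (ψ ^ m)⁻¹)
    (k : ℕ) (hk : k ≤ K) (hkm : (p k).2 < m) : (p k).1 = (p 0).1 := by
  induction k with
  | zero => rfl
  | succ k ih =>
    have h1 := mono_pre hY hψ hω hp hm hK hKm hlen k (k + 1) (by omega) hk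
    have h2 := ih (by omega) (by omega)
    rcases hp k (by omega) with h | h
    · have := noHoriz hY hψ hω hp hm hK hKm hlen k (by omega) h
      omega
    · rw [← h.1, h2]

lemma exists_pre (hY : Subgroup.closure Y = ⊤) (hψ : 1 < ψ) (hω : 0 < ω)
    (hp : IsPathOn Y p n) (hm : ∀ k ≤ n, (p k).2 ≤ m) (hK : K ≤ n) (hKm : (p K).2 = m)
    (hlen : pathLen ψ ω p n ≤ ω * Real.log ψ * (2 * m - (p 0).2 - (p n).2)
      + wd Y (p 0).1 (p n).1 * (ψ ^ m)⁻¹)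
    (t : ℕ) (h0t : (p 0).2 ≤ t) (htm : t ≤ m) : ∃ k ≤ n, p k = ((p 0).1, t) := by
  classical
  have hex : ∃ k, t ≤ (p k).2 := ⟨K, by omega⟩
  have hkK : Nat.find hex ≤ K := Nat.find_min' hex (by omega)
  have hsp := Nat.find_spec hex
  have hmin := fun k => Nat.find_min hex (m := k)
  generalize Nat.find hex = k at *
  refine ⟨k, by omega, ?_⟩
  cases k with
  | zero => exact Prod.ext rfl (by simp only; omega)
  | succ k =>
    have h1 := hmin k (by omega)
    have h2 := vert_pre hY hψ hω hp hm hK hKm hlen k (by omega) (by omega)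
    rcases hp k (by omega) with h | h
    · have := h.1; omega
    · have h3 := h.2
      exact Prod.ext (by simp only; rw [← h.1, h2]) (by simp only; omega)

end PreLemmas

lemma pathLen_rev {Y : Set H} {ψ ω : ℝ} {p : ℕ → H × ℕ} {n : ℕ} :
    pathLen ψ ω (fun k => p (n - k)) n = pathLen ψ ω p n := by
  unfold pathLen
  rw [← Finset.sum_range_reflect]
  refine Finset.sum_congr rfl fun k hk => ?_
  have hk := Finset.mem_range.1 hk
  have h1 : n - (n - 1 - k) = k + 1 := by omega
  have h2 : n - (n - 1 - k + 1) = k := by omega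
  simp only [h1, h2]
  unfold stepLen
  by_cases h : (p k).2 = (p (k + 1)).2
  · rw [if_pos h, if_pos h.symm, h]
  · rw [if_neg h, if_neg (Ne.symm h)]

lemma isPathOn_rev {Y : Set H} {p : ℕ → H × ℕ} {n : ℕ} (hp : IsPathOn Y p n) :
    IsPathOn Y (fun k => p (n - k)) n := by
  intro k hk
  have h := hp (n - (k + 1)) (by omega)
  have h1 : n - (k + 1) + 1 = n - k := by omega
  rw [h1] at h
  rcases h with ⟨h1, y, hy, h2⟩ | ⟨h1, h2⟩
  · refine Or.inl ⟨h1.symm, y⁻¹, ?_, ?_⟩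
    · rw [inv_inv]; exact hy.symm
    · simp [h2]
  · exact Or.inr ⟨h1.symm, h2.symm⟩

/-- Shape of a geodesic between `u` and `v`. -/
structure Shape (Y : Set H) (ψ ω : ℝ) (p : ℕ → H × ℕ) (n : ℕ) (u v : H × ℕ) (m : ℕ) : Prop where
  hu : u.2 ≤ m
  hv : v.2 ≤ m
  upper : (wd Y u.1 v.1 : ℝ) * (ψ - 1) ≤ 2 * (ω * Real.log ψ) * ψ * ψ ^ m
  lower : u.2 < m → v.2 < m → 2 * (ω * Real.log ψ) * ψ ^ m ≤ (wd Y u.1 v.1 : ℝ) * (ψ - 1)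
  exu : ∀ t, u.2 ≤ t → t ≤ m → ∃ k ≤ n, p k = (u.1, t)
  exv : ∀ t, v.2 ≤ t → t ≤ m → ∃ k ≤ n, p k = (v.1, t)
  pts : ∀ k ≤ n, ((p k).1 = u.1 ∧ u.2 ≤ (p k).2 ∧ (p k).2 ≤ m) ∨
    ((p k).1 = v.1 ∧ v.2 ≤ (p k).2 ∧ (p k).2 ≤ m) ∨
    ((p k).2 = m ∧ wd Y (p k).1 u.1 ≤ wd Y u.1 v.1 ∧ wd Y (p k).1 v.1 ≤ wd Y u.1 v.1)

lemma Shape.symm {Y : Set H} (hY : Subgroup.closure Y = ⊤) {ψ ω : ℝ} {p : ℕ → H × ℕ} {n : ℕ}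
    {u v : H × ℕ} {m : ℕ} (h : Shape Y ψ ω p n u v m) : Shape Y ψ ω p n v u m where
  hu := h.hv
  hv := h.hu
  upper := by rw [wd_comm hY]; exact h.upper
  lower := fun h1 h2 => by rw [wd_comm hY]; exact h.lower h2 h1
  exu := h.exv
  exv := h.exu
  pts := fun k hk => by
    rw [wd_comm hY v.1 u.1]
    have := h.pts k hk
    tauto

lemma shape_of_geodesic {Y : Set H} (hY : Subgroup.closure Y = ⊤) {ψ ω : ℝ} (hψ : 1 < ψ)
    (hω : 0 < ω) {p : ℕ → H × ℕ} {n : ℕ} (hg : IsGeodesicPath Y ψ ω p n) :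
    ∃ m, Shape Y ψ ω p n (p 0) (p n) m := by
  obtain ⟨hp, hl⟩ := hg
  obtain ⟨K, hK, hKmax⟩ := Finset.exists_max_image (Finset.range (n + 1)) (fun k => (p k).2)
    ⟨0, by simp⟩
  have hK : K ≤ n := by have := Finset.mem_range.1 hK; omega
  have hm : ∀ k ≤ n, (p k).2 ≤ (p K).2 := fun k hk => hKmax k (Finset.mem_range.2 (by omega))
  obtain ⟨m, hKm⟩ : ∃ m, (p K).2 = m := ⟨_, rfl⟩
  rw [hKm] at hm
  have hcomp := competitor hY hψ hω (p 0) (p n)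
  have hlen := hcomp m (hm _ (by omega)) (hm _ le_rfl)
  rw [← hl] at hlen hcomp
  have hlog := Real.log_pos hψ
  have hlam : 0 < ω * Real.log ψ := by positivity
  have hpm : 0 < (ψ ^ m)⁻¹ := by positivity
  have hψ0 : 0 < ψ := by linarith
  have hpp : 0 < ψ ^ m := by positivity
  -- lower bound of length
  have hlow : ω * Real.log ψ * (2 * m - (p 0).2 - (p n).2) + wd Y (p 0).1 (p n).1 * (ψ ^ m)⁻¹
      ≤ pathLen ψ ω p n := by
    have e3 := seg hY hψ hω hp hm (Nat.zero_le K) hK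
    have e4 := seg hY hψ hω hp hm hK le_rfl
    have t1 : (wd Y (p 0).1 (p n).1 : ℝ) ≤ 
        wd Y (p 0).1 (p K).1 + wd Y (p K).1 (p n).1 := by
      exact_mod_cast wd_tri hY (p 0).1 (p K).1 (p n).1
    have h0 : pathLen ψ ω p 0 = 0 := by simp [pathLen]
    rw [h0] at e3
    have b3 := le_abs_self (((p K).2 : ℝ) - (p 0).2)
    have b4 := neg_le_abs (((p n).2 : ℝ) - (p K).2)
    have hKm' : ((p K).2 : ℝ) = m := by exact_mod_cast hKm
    have b := mul_le_mul_of_nonneg_left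
      (show (2 * m - (p 0).2 - (p n).2 : ℝ) ≤ |((p K).2 : ℝ) - (p 0).2|
        + |((p n).2 : ℝ) - (p K).2| by linarith) hlam.le
    have t2 := mul_le_mul_of_nonneg_right t1 hpm.le
    linarith
  -- reversed path
  have hp' := isPathOn_rev hp
  have hm' : ∀ k ≤ n, ((fun k => p (n - k)) k).2 ≤ m := fun k _ => hm _ (by omega)
  have hKm' : ((fun k => p (n - k)) (n - K)).2 = m := by
    simp only [show n - (n - K) = K by omega, hKm]
  have hlen' : pathLen ψ ω (fun k => p (n - k)) n ≤ ω * Real.log ψ *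
      (2 * m - ((fun k => p (n - k)) 0).2 - ((fun k => p (n - k)) n).2)
      + wd Y ((fun k => p (n - k)) 0).1 ((fun k => p (n - k)) n).1 * (ψ ^ m)⁻¹ := by
    rw [pathLen_rev (Y := Y)]
    simp only [Nat.sub_zero, Nat.sub_self]
    rw [wd_comm hY]
    linarith
  have hK' : n - K ≤ n := by omega
  refine ⟨m, hm _ (by omega), hm _ le_rfl, ?_, ?_, ?_, ?_, ?_⟩
  · have h1 := hcomp (m + 1) ((hm _ (by omega)).trans (by omega)) ((hm _ le_rfl).trans (by omega))
    have h2 := hlow.trans h1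
    push_cast at h2
    have h3 : (wd Y (p 0).1 (p n).1 : ℝ) * ((ψ ^ m)⁻¹ - (ψ ^ (m + 1))⁻¹) ≤ 2 * (ω * Real.log ψ) := by
      linarith
    have h4 : (ψ ^ m)⁻¹ - (ψ ^ (m + 1))⁻¹ = (ψ - 1) / (ψ * ψ ^ m) := by
      rw [pow_succ]; field_simp
    rw [h4, ← mul_div_assoc, div_le_iff₀ (by positivity)] at h3
    linarith
  · intro hu hv
    obtain ⟨m, rfl⟩ : ∃ r, m = r + 1 := ⟨m - 1, by omega⟩
    have h1 := hcomp m (by omega) (by omega)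
    have h2 := hlow.trans h1
    push_cast at h2
    have h3 : 2 * (ω * Real.log ψ) ≤ (wd Y (p 0).1 (p n).1 : ℝ) * ((ψ ^ m)⁻¹ - (ψ ^ (m + 1))⁻¹) := by
      linarith
    have h4 : (ψ ^ m)⁻¹ - (ψ ^ (m + 1))⁻¹ = (ψ - 1) / ψ ^ (m + 1) := by
      rw [pow_succ]; field_simp
    rw [h4, ← mul_div_assoc, le_div_iff₀ (by positivity)] at h3
    linarith
  · exact fun t h1 h2 => exists_pre hY hψ hω hp hm hK hKm hlen t h1 h2
  · intro t h1 h2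
    obtain ⟨k, hk, h⟩ := exists_pre hY hψ hω hp' hm' hK' hKm' hlen' t (by simpa using h1) h2
    exact ⟨n - k, by omega, by simpa using h⟩
  · intro k hk
    have hkm := hm k hk
    by_cases hkK : k ≤ K
    · by_cases hlt : (p k).2 < m
      · exact Or.inl ⟨vert_pre hY hψ hω hp hm hK hKm hlen k hkK hlt,
          mono_pre hY hψ hω hp hm hK hKm hlen 0 k (by omega) hkK, hkm⟩
      · have := dist_pre hY hψ hω hp hm hK hKm hlen k hkK
        rw [wd_comm hY (p k).1 (p 0).1]
        exact Or.inr (Or.inr ⟨by omega, by omega, by omega⟩)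
    · have hkk : n - (n - k) = k := by omega
      by_cases hlt : (p k).2 < m
      · have h1 := vert_pre hY hψ hω hp' hm' hK' hKm' hlen' (n - k) (by omega) (by simpa [hkk])
        have h2 := mono_pre hY hψ hω hp' hm' hK' hKm' hlen' 0 (n - k) (by omega) (by omega)
        simp only [hkk, Nat.sub_zero] at h1 h2
        exact Or.inr (Or.inl ⟨h1, h2, hkm⟩)
      · have := dist_pre hY hψ hω hp' hm' hK' hKm' hlen' (n - k) (by omega)
        simp only [hkk, Nat.sub_zero, Nat.sub_self] at this
        rw [wd_comm hY (p n).1 (p k).1, wd_comm hY (p n).1 (p 0).1] at this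
        exact Or.inr (Or.inr ⟨by omega, by omega, by omega⟩)

lemma horiz_bound {Y : Set H} {ψ ω : ℝ} (hψ : 1 < ψ) (hω : 0 < ω) {D m t : ℕ}
    (h : (D : ℝ) * (ψ - 1) ≤ 2 * (ω * Real.log ψ) * ψ * ψ ^ m) (hmt : m ≤ t) :
    (D : ℝ) * (ψ ^ t)⁻¹ ≤ 2 * ω * ψ := by
  have h1 : Real.log ψ ≤ ψ - 1 := Real.log_le_sub_one_of_pos (by linarith)
  have h2 : ψ ^ m ≤ ψ ^ t := pow_le_pow_right₀ hψ.le hmt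
  have hpp : 0 < ψ ^ m := by positivity
  have hpt : 0 < ψ ^ t := by positivity
  rw [← div_eq_mul_inv, div_le_iff₀ hpt]
  have h3 : (D : ℝ) * (ψ - 1) ≤ (2 * ω * ψ * ψ ^ m) * (ψ - 1) := by
    refine h.trans ?_
    have := mul_le_mul_of_nonneg_left h1 (show 0 ≤ 2 * ω * ψ * ψ ^ m by positivity)
    linarith
  have h4 := le_of_mul_le_mul_right h3 (by linarith)
  exact h4.trans (mul_le_mul_of_nonneg_left h2 (by positivity))

lemma thin_aux {Y : Set H} (hY : Subgroup.closure Y = ⊤) {ψ ω : ℝ} (hψ : 1 < ψ) (hω : 0 < ω)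
    {p q r : ℕ → H × ℕ} {n l s : ℕ} {a b c : H × ℕ} {M mb ma : ℕ}
    (hp : Shape Y ψ ω p n a b M) (hq : Shape Y ψ ω q l b c mb) (hr : Shape Y ψ ω r s a c ma)
    (hle : mb ≤ ma) :
    SideThin Y ψ ω (4 * ω * ψ + (Real.log 2 / Real.log ψ + 2) * (ω * Real.log ψ)) p n q l r s := by
  have hlog := Real.log_pos hψ
  have hlog2 : 0 < Real.log 2 := Real.log_pos (by norm_num)
  have hlam : 0 < ω * Real.log ψ := by positivity
  have hψ0 : 0 < ψ := by linarith
  have hωψ : 0 < ω * ψ := by positivity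
  have hδ : 4 * ω * ψ + (Real.log 2 / Real.log ψ + 2) * (ω * Real.log ψ)
      = 4 * (ω * ψ) + ω * Real.log 2 + 2 * (ω * Real.log ψ) := by field_simp; ring
  have hω2 : 0 < ω * Real.log 2 := by positivity
  rw [hδ]
  -- key bound
  have key : ∀ d : ℕ, ma + d ≤ M → d * (ω * Real.log ψ) ≤ ω * Real.log 2 + ω * Real.log ψ := by
    intro d hd
    rcases Nat.eq_zero_or_pos d with rfl | hd0
    · simp only [Nat.cast_zero, zero_mul]; positivity
    have h1 := hp.lower (by have := hr.hu; omega) (by have := hq.hu; omega)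
    have h2 := hr.upper
    have h3 := hq.upper
    have h4 : (wd Y a.1 b.1 : ℝ) ≤ wd Y a.1 c.1 + wd Y b.1 c.1 := by
      rw [wd_comm hY b.1 c.1]; exact_mod_cast wd_tri hY _ _ _
    have h5 : ψ ^ mb ≤ ψ ^ ma := pow_le_pow_right₀ hψ.le hle
    have h6 : ψ ^ (ma + d) ≤ ψ ^ M := pow_le_pow_right₀ hψ.le hd
    have h7 := mul_le_mul_of_nonneg_right h4 (show 0 ≤ ψ - 1 by linarith)
    have h8 := mul_le_mul_of_nonneg_left h5 (show 0 ≤ 2 * (ω * Real.log ψ) * ψ by positivity)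
    have h9 := mul_le_mul_of_nonneg_left h6 (show 0 ≤ 2 * (ω * Real.log ψ) by positivity)
    have hpa : 0 < 2 * (ω * Real.log ψ) * ψ ^ ma := by positivity
    have h10 : (2 * (ω * Real.log ψ) * ψ ^ ma) * ψ ^ d ≤ (2 * (ω * Real.log ψ) * ψ ^ ma) * (2 * ψ) := by
      rw [pow_add] at h9
      linarith
    have h11 := le_of_mul_le_mul_left h10 hpa
    have h12 := Real.log_le_log (by positivity) h11
    rw [Real.log_pow, Real.log_mul (by norm_num) (by positivity)] at h12
    have := mul_le_mul_of_nonneg_left h12 hω.le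
    linarith
  -- descending to depth at most `ma`
  have desc : ∀ (u : H × ℕ) (h : H) (t : ℕ) (x : ℝ), t ≤ M → Reach Y ψ ω u (h, t) x →
      ∃ x' ≤ x + (ω * Real.log 2 + ω * Real.log ψ), Reach Y ψ ω u (h, min t ma) x' := by
    intro u h t x ht hre
    rcases le_total t ma with h1 | h1
    · exact ⟨x, by linarith, by rwa [min_eq_left h1]⟩
    · obtain ⟨d, rfl⟩ := Nat.exists_eq_add_of_le h1
      rw [min_eq_right h1]
      exact ⟨_, by linarith [key d ht], hre.down d⟩
  have aside : ∀ (u : H × ℕ) (t : ℕ) (x : ℝ), a.2 ≤ t → t ≤ M → x ≤ 2 * ω * ψ →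
      Reach Y ψ ω u (a.1, t) x → ∃ j ≤ s, cuspDist Y ψ ω u (r j)
        ≤ 4 * (ω * ψ) + ω * Real.log 2 + 2 * (ω * Real.log ψ) := by
    intro u t x hat htM hx hre
    obtain ⟨x', hx', hre'⟩ := desc u _ t x htM hre
    obtain ⟨j, hj, hjr⟩ := hr.exu (min t ma) (le_min hat hr.hu) (min_le_right _ _)
    refine ⟨j, hj, ?_⟩
    rw [hjr]
    exact (cuspDist_le_of_reach hψ hω hre').trans (by linarith)
  intro k hk
  rcases hp.pts k hk with ⟨h1, h2, h3⟩ | ⟨h1, h2, h3⟩ | ⟨h1, h2, h3⟩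
  · have hre : Reach Y ψ ω (p k) (a.1, (p k).2) 0 := h1 ▸ Reach.refl Y ψ ω (p k)
    obtain ⟨j, hj, hd⟩ := aside (p k) _ 0 h2 h3 (by linarith) hre
    exact ⟨j, Or.inr ⟨hj, hd⟩⟩
  · have hre : Reach Y ψ ω (p k) (b.1, (p k).2) 0 := h1 ▸ Reach.refl Y ψ ω (p k)
    obtain ⟨x', hx', hre'⟩ := desc _ _ _ _ h3 hre
    have hbt : b.2 ≤ min (p k).2 ma := le_min h2 (hq.hu.trans hle)
    by_cases hmb : min (p k).2 ma ≤ mb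
    · obtain ⟨j, hj, hjq⟩ := hq.exu _ hbt hmb
      refine ⟨j, Or.inl ⟨hj, ?_⟩⟩
      rw [hjq]
      exact (cuspDist_le_of_reach hψ hω hre').trans (by linarith)
    · have hre'' := hre'.horiz hY hψ c.1
      obtain ⟨j, hj, hjr⟩ := hr.exv (min (p k).2 ma) (by have := hq.hv; omega) (min_le_right _ _)
      refine ⟨j, Or.inr ⟨hj, ?_⟩⟩
      rw [hjr]
      have := horiz_bound (Y := Y) hψ hω hq.upper (t := min (p k).2 ma) (by omega)
      exact (cuspDist_le_of_reach hψ hω hre'').trans (by linarith)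
  · have hre := (Reach.refl Y ψ ω (p k)).horiz (h := (p k).1) (i := (p k).2) hY hψ a.1
    have hb := horiz_bound (Y := Y) hψ hω hp.upper (t := (p k).2) h1.ge
    have h2' : (wd Y (p k).1 a.1 : ℝ) ≤ wd Y a.1 b.1 := by exact_mod_cast h2
    have h4 := mul_le_mul_of_nonneg_right h2' (show 0 ≤ (ψ ^ (p k).2)⁻¹ by positivity)
    obtain ⟨j, hj, hd⟩ := aside (p k) _ _ (h1 ▸ hp.hu) h1.le (by linarith) hre
    exact ⟨j, Or.inr ⟨hj, hd⟩⟩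

lemma thin {Y : Set H} (hY : Subgroup.closure Y = ⊤) {ψ ω : ℝ} (hψ : 1 < ψ) (hω : 0 < ω)
    {p q r : ℕ → H × ℕ} {n l s : ℕ} {a b c : H × ℕ} {M mb ma : ℕ}
    (hp : Shape Y ψ ω p n a b M) (hq : Shape Y ψ ω q l b c mb) (hr : Shape Y ψ ω r s a c ma) :
    SideThin Y ψ ω (4 * ω * ψ + (Real.log 2 / Real.log ψ + 2) * (ω * Real.log ψ)) p n q l r s := by
  rcases le_total mb ma with h | h
  · exact thin_aux hY hψ hω hp hq hr h
  · intro k hk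
    obtain ⟨j, hj⟩ := thin_aux hY hψ hω (hp.symm hY) hr hq h k hk
    exact ⟨j, hj.symm⟩

/-- The cusp complex of a finitely generated group is δ-hyperbolic:
every geodesic triangle is δ-thin, with
`δ = 4ωψ + (log_ψ 2 + 2) ω log ψ`. -/
theorem cusp_complex_hyperbolic
    (Y : Set H) (hYfin : Y.Finite) (hYgen : Subgroup.closure Y = ⊤)
    (ψ ω : ℝ) (hψ : 1 < ψ) (hω : 0 < ω)
    (a b c : H × ℕ)
    (pab : ℕ → H × ℕ) (nab : ℕ) (hab : IsGeodesicPath Y ψ ω pab nab)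
    (hab0 : pab 0 = a) (hab1 : pab nab = b)
    (pbc : ℕ → H × ℕ) (nbc : ℕ) (hbc : IsGeodesicPath Y ψ ω pbc nbc)
    (hbc0 : pbc 0 = b) (hbc1 : pbc nbc = c)
    (pac : ℕ → H × ℕ) (nac : ℕ) (hac : IsGeodesicPath Y ψ ω pac nac)
    (hac0 : pac 0 = a) (hac1 : pac nac = c) :
    SideThin Y ψ ω (4 * ω * ψ + (Real.log 2 / Real.log ψ + 2) * (ω * Real.log ψ))
        pab nab pbc nbc pac nac ∧
    SideThin Y ψ ω (4 * ω * ψ + (Real.log 2 / Real.log ψ + 2) * (ω * Real.log ψ))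
        pbc nbc pab nab pac nac ∧
    SideThin Y ψ ω (4 * ω * ψ + (Real.log 2 / Real.log ψ + 2) * (ω * Real.log ψ))
        pac nac pab nab pbc nbc := by
  obtain ⟨mab, sab⟩ := shape_of_geodesic hYgen hψ hω hab
  obtain ⟨mbc, sbc⟩ := shape_of_geodesic hYgen hψ hω hbc
  obtain ⟨mac, sac⟩ := shape_of_geodesic hYgen hψ hω hac
  rw [hab0, hab1] at sab
  rw [hbc0, hbc1] at sbc
  rw [hac0, hac1] at sac
  exact ⟨thin hYgen hψ hω sab sbc sac,
    thin hYgen hψ hω (sbc.symm hYgen) (sab.symm hYgen) (sac.symm hYgen),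
    thin hYgen hψ hω (sac.symm hYgen) sab (sbc.symm hYgen)⟩
end

section
/- For every C ∈ ℝ there exists L = L(C) ∈ ℝ (one may take L = 2C + log 16) with the following property: let T ⊂ ℍⁿ be a geodesic triangle with exactly one ideal vertex, with ordinary vertices x and y joined by a geodesic arc α of length ℓ > L, and let β and γ be the geodesic rays of T issuing from x and y respectively (both asymptotic to the ideal vertex); suppose b_β(y) = 0. Then the midpoint z of α satisfies b_β(z) ≤ −C. -/
/-!
STATEMENT 16: For every `C ∈ ℝ` there exists `L = L(C) ∈ ℝ` such that: whenever
`T ⊂ ℍⁿ` is a geodesic triangle with one ideal vertex, ordinary vertices `x, y` joined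
by a geodesic arc `α` of length `ℓ > L`, and geodesic rays `β` (from `x`) and `γ`
(from `y`) asymptotic to each other, normalized so that `b_β(y) = 0`, the midpoint
`z = α(ℓ/2)` of `α` satisfies `b_β(z) ≤ -C`.

Real hyperbolic `n`-space is realized by the upper half-space model, with the explicit
distance function `d(p,q) = arcosh (1 + (|p₁-q₁|² + (p₂-q₂)²) / (2 p₂ q₂))`.
-/

open Set

/-- Upper half-space model of `ℍⁿ` (the last coordinate is the height). -/
def UHS (n : ℕ) : Type := {p : EuclideanSpace ℝ (Fin n) × ℝ // 0 < p.2}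

/-- Inverse hyperbolic cosine. -/
noncomputable def arcosh (x : ℝ) : ℝ := Real.log (x + Real.sqrt (x ^ 2 - 1))

/-- The hyperbolic distance on the upper half-space model. -/
noncomputable def uhsDist {n : ℕ} (p q : UHS n) : ℝ :=
  arcosh (1 + (dist p.1.1 q.1.1 ^ 2 + (p.1.2 - q.1.2) ^ 2) / (2 * p.1.2 * q.1.2))

/-- `f` restricted to `s` is a unit-speed geodesic for the hyperbolic distance. -/
def UIsGeodesicOn {n : ℕ} (f : ℝ → UHS n) (s : Set ℝ) : Prop :=
  ∀ a ∈ s, ∀ b ∈ s, uhsDist (f a) (f b) = |a - b|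

/-- A geodesic ray in `ℍⁿ`. -/
def UIsRay {n : ℕ} (r : ℝ → UHS n) : Prop := UIsGeodesicOn r (Ici 0)

/-- Two rays are asymptotic if they stay at bounded distance. -/
def UAsymptotic {n : ℕ} (r r' : ℝ → UHS n) : Prop :=
  ∃ K : ℝ, ∀ t ≥ (0:ℝ), uhsDist (r t) (r' t) ≤ K

/-- The Buseman function of the ray `r` takes the value `L` at `x`. -/
def UBusemannTendsto {n : ℕ} (r : ℝ → UHS n) (x : UHS n) (L : ℝ) : Prop :=
  Filter.Tendsto (fun t => uhsDist x (r t) - t) Filter.atTop (nhds L)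

theorem cosh_arcosh_aux (c : ℝ) (hc : 1 ≤ c) : Real.cosh (arcosh c) = c := by
  unfold arcosh
  have h0 : 0 ≤ c ^ 2 - 1 := by nlinarith
  have hs := Real.sq_sqrt h0
  have hn := Real.sqrt_nonneg (c ^ 2 - 1)
  have hp : 0 < c + Real.sqrt (c ^ 2 - 1) := by linarith
  rw [Real.cosh_log hp]
  field_simp
  nlinarith

theorem uhs_arg_ge {n : ℕ} (p q : UHS n) :
    1 ≤ 1 + (dist p.1.1 q.1.1 ^ 2 + (p.1.2 - q.1.2) ^ 2) / (2 * p.1.2 * q.1.2) := by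
  have h1 := p.2
  have h2 := q.2
  have : 0 ≤ (dist p.1.1 q.1.1 ^ 2 + (p.1.2 - q.1.2) ^ 2) / (2 * p.1.2 * q.1.2) := by
    positivity
  linarith

theorem uhs_dist_eq {n : ℕ} (p q : UHS n) :
    uhsDist p q = arcosh (Real.cosh (uhsDist p q)) := by
  have h : Real.cosh (uhsDist p q) = _ := cosh_arcosh_aux _ (uhs_arg_ge p q)
  rw [h]; rfl

theorem uhs_cosh {n : ℕ} (p q : UHS n) :
    ‖p.1.1 - q.1.1‖ ^ 2 + p.1.2 ^ 2 + q.1.2 ^ 2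
      = 2 * p.1.2 * q.1.2 * Real.cosh (uhsDist p q) := by
  have h : Real.cosh (uhsDist p q) = _ := cosh_arcosh_aux _ (uhs_arg_ge p q)
  have h1 := p.2
  have h2 := q.2
  have h1' := h1.ne'
  have h2' := h2.ne'
  rw [h, dist_eq_norm]
  field_simp
  ring

theorem median_alg {E : Type*} [NormedAddCommGroup E] [InnerProductSpace ℝ E]
    (A B F : E) (s t u k v : ℝ) (hs : 0 < s) (ht : 0 < t)
    (hA : ‖A‖ ^ 2 + s ^ 2 + u ^ 2 = 2 * s * u * k)
    (hB : ‖B‖ ^ 2 + t ^ 2 + u ^ 2 = 2 * t * u * k)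
    (hAB : ‖A - B‖ ^ 2 + s ^ 2 + t ^ 2 = 2 * s * t * (2 * k ^ 2 - 1)) :
    u * (t * (‖A - F‖ ^ 2 + s ^ 2 + v ^ 2) + s * (‖B - F‖ ^ 2 + t ^ 2 + v ^ 2))
      = 2 * k * s * t * (‖F‖ ^ 2 + u ^ 2 + v ^ 2) ∧ u * (s + t) = 2 * k * s * t := by
  rw [norm_sub_sq_real] at hAB
  have e1 : ‖t • A + s • B‖ ^ 2 + (u * (s + t) - 2 * k * s * t) ^ 2 = 0 := by
    rw [norm_add_sq_real, norm_smul, norm_smul, inner_smul_left, inner_smul_right, mul_pow,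
      mul_pow, Real.norm_eq_abs, Real.norm_eq_abs, sq_abs, sq_abs]
    simp only [conj_trivial]
    linear_combination (t^2 + s * t) * hA + (s^2 + s * t) * hB - s * t * hAB
  have e2 : u * (s + t) - 2 * k * s * t = 0 := by
    have := sq_nonneg ‖t • A + s • B‖
    have := sq_nonneg (u * (s + t) - 2 * k * s * t)
    apply pow_eq_zero_iff (two_ne_zero) |>.1
    linarith
  have e3 : t • A + s • B = 0 := by
    rw [e2] at e1
    simpa using e1
  have e4 : t * inner ℝ A F + s * inner ℝ B F = 0 := by
    have : inner ℝ (t • A + s • B) F = 0 := by rw [e3, inner_zero_left]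
    rw [inner_add_left, inner_smul_left, inner_smul_left] at this
    simpa using this
  refine ⟨?_, by linarith⟩
  rw [norm_sub_sq_real, norm_sub_sq_real]
  linear_combination u * t * hA + u * s * hB - 2 * u * e4 + (‖F‖ ^ 2 + v ^ 2 - u ^ 2) * e2

theorem median_uhs {n : ℕ} (x y z w : UHS n) (h : ℝ) (hx : uhsDist x z = h)
    (hy : uhsDist y z = h) (hxy : uhsDist x y = 2 * h) :
    Real.cosh (uhsDist x w) + Real.cosh (uhsDist y w)
      = 2 * Real.cosh h * Real.cosh (uhsDist z w) := by
  have q1 := uhs_cosh x z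
  have q2 := uhs_cosh y z
  have q3 := uhs_cosh x y
  have q4 := uhs_cosh x w
  have q5 := uhs_cosh y w
  have q6 := uhs_cosh z w
  rw [hx] at q1
  rw [hy] at q2
  rw [hxy, Real.cosh_two_mul, Real.sinh_sq] at q3
  have hs := x.2
  have ht := y.2
  have hu := z.2
  have hv := w.2
  obtain ⟨m, -⟩ := median_alg (x.1.1 - z.1.1) (y.1.1 - z.1.1) (w.1.1 - z.1.1)
    x.1.2 y.1.2 z.1.2 (Real.cosh h) w.1.2 hs ht q1 q2
    (by rw [sub_sub_sub_cancel_right]; linarith)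
  rw [sub_sub_sub_cancel_right, sub_sub_sub_cancel_right, norm_sub_rev w.1.1, q4, q5, q6] at m
  have hne : 2 * x.1.2 * y.1.2 * z.1.2 * w.1.2 ≠ 0 := by positivity
  apply mul_left_cancel₀ hne
  linear_combination m

theorem tendsto_exp_cosh (f : ℝ → ℝ) (L : ℝ)
    (hf : Filter.Tendsto (fun t => f t - t) Filter.atTop (nhds L)) :
    Filter.Tendsto (fun t => Real.cosh (f t) * Real.exp (-t)) Filter.atTop
      (nhds (Real.exp L / 2)) := by
  have h1 : Filter.Tendsto (fun t => Real.exp (f t - t)) Filter.atTop (nhds (Real.exp L)) :=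
    (Real.continuous_exp.tendsto L).comp hf
  have hm : Filter.Tendsto (fun t : ℝ => Real.exp (-t)) Filter.atTop (nhds 0) :=
    Real.tendsto_exp_neg_atTop_nhds_zero
  have h2 : Filter.Tendsto (fun t => Real.exp (-(f t - t)) * (Real.exp (-t) * Real.exp (-t)))
      Filter.atTop (nhds (Real.exp (-L) * (0 * 0))) :=
    ((Real.continuous_exp.tendsto (-L)).comp hf.neg).mul (hm.mul hm)
  have h3 := (h1.add h2).div_const 2
  simp only [mul_zero, add_zero] at h3
  refine h3.congr fun t => ?_
  rw [Real.cosh_eq, ← Real.exp_add, ← Real.exp_add, div_mul_eq_mul_div, add_mul, ← Real.exp_add,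
    ← Real.exp_add]
  ring_nf

theorem tendsto_arcosh (c : ℝ → ℝ) (M : ℝ) (hM : 0 < M) (hc1 : ∀ t, 1 ≤ c t)
    (hc : Filter.Tendsto (fun t => c t * Real.exp (-t)) Filter.atTop (nhds M)) :
    Filter.Tendsto (fun t => arcosh (c t) - t) Filter.atTop (nhds (Real.log (2 * M))) := by
  have hm : Filter.Tendsto (fun t : ℝ => Real.exp (-t)) Filter.atTop (nhds 0) :=
    Real.tendsto_exp_neg_atTop_nhds_zero
  have h1 : Filter.Tendsto (fun t => c t * Real.exp (-t) +
      Real.sqrt ((c t * Real.exp (-t)) ^ 2 - Real.exp (-t) ^ 2)) Filter.atTop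
      (nhds (M + Real.sqrt (M ^ 2 - 0 ^ 2))) :=
    hc.add ((Real.continuous_sqrt.tendsto _).comp ((hc.pow 2).sub (hm.pow 2)))
  have e : M + Real.sqrt (M ^ 2 - 0 ^ 2) = 2 * M := by
    rw [zero_pow two_ne_zero, sub_zero, Real.sqrt_sq hM.le]; ring
  rw [e] at h1
  refine (h1.log (by positivity)).congr fun t => ?_
  have hE := Real.exp_pos (-t)
  have : (c t * Real.exp (-t)) ^ 2 - Real.exp (-t) ^ 2 = (c t ^ 2 - 1) * Real.exp (-t) ^ 2 := by
    ring
  have h0 : 0 ≤ c t ^ 2 - 1 := by nlinarith [hc1 t]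
  have hp : 0 < c t + Real.sqrt (c t ^ 2 - 1) := by
    have := Real.sqrt_nonneg (c t ^ 2 - 1)
    linarith [hc1 t]
  rw [this, Real.sqrt_mul h0, Real.sqrt_sq hE.le, ← add_mul, Real.log_mul hp.ne' hE.ne',
    Real.log_exp]
  rfl

/-- Depth of the midpoint of the finite side of an ideal "isosceles" triangle in `ℍⁿ`. -/
theorem ideal_triangle_midpoint_depth (C : ℝ) :
    ∃ L : ℝ, ∀ (n : ℕ) (x y : UHS n) (ℓ : ℝ), ℓ > L →
      ∀ α : ℝ → UHS n, UIsGeodesicOn α (Icc 0 ℓ) → α 0 = x → α ℓ = y →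
      ∀ β γ : ℝ → UHS n, UIsRay β → UIsRay γ → β 0 = x → γ 0 = y → UAsymptotic β γ →
      UBusemannTendsto β y 0 →
      ∃ Lz ≤ -C, UBusemannTendsto β (α (ℓ / 2)) Lz := by
  refine ⟨2 * |C| + 2 * Real.log 2, ?_⟩
  intro n x y ℓ hℓ α hα hx hy β γ hβ _ hβ0 _ _ hb
  have hl2 : 0 < Real.log 2 := Real.log_pos (by norm_num)
  have hpos : 0 < ℓ := by linarith [abs_nonneg C]
  have m0 : (0:ℝ) ∈ Icc 0 ℓ := ⟨le_rfl, hpos.le⟩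
  have m1 : ℓ ∈ Icc 0 ℓ := ⟨hpos.le, le_rfl⟩
  have m2 : ℓ / 2 ∈ Icc 0 ℓ := ⟨by linarith, by linarith⟩
  have d1 := hα 0 m0 _ m2
  have d2 := hα ℓ m1 _ m2
  have d3 := hα 0 m0 _ m1
  rw [hx, show (0:ℝ) - ℓ / 2 = -(ℓ / 2) by ring, abs_neg, abs_of_pos (by linarith)] at d1
  rw [hy, show ℓ - ℓ / 2 = ℓ / 2 by ring, abs_of_pos (by linarith)] at d2
  rw [hx, hy, show (0:ℝ) - ℓ = -ℓ by ring, abs_neg, abs_of_pos hpos] at d3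
  have med := fun w => median_uhs x y (α (ℓ / 2)) w (ℓ / 2) d1 d2
    (by rw [d3]; ring)
  have hk := Real.cosh_pos (ℓ / 2)
  have hbx : UBusemannTendsto β x 0 := by
    refine tendsto_const_nhds.congr' ?_
    filter_upwards [Filter.eventually_ge_atTop 0] with t ht
    have := hβ 0 (by simp) t ht
    rw [hβ0, zero_sub, abs_neg, abs_of_nonneg ht] at this
    rw [this, sub_self]
  have t1 := tendsto_exp_cosh _ _ hbx
  have t2 := tendsto_exp_cosh _ _ hb
  have t3 := (t1.add t2).div_const (2 * Real.cosh (ℓ / 2))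
  have t4 := tendsto_arcosh (fun t => Real.cosh (uhsDist (α (ℓ / 2)) (β t))) _
    (by rw [Real.exp_zero]; positivity) (fun t => Real.one_le_cosh _)
    (t3.congr fun t => by
      rw [← add_mul, med]
      field_simp)
  refine ⟨_, ?_, t4.congr fun t => by rw [← uhs_dist_eq]⟩
  have e : 2 * ((Real.exp 0 / 2 + Real.exp 0 / 2) / (2 * Real.cosh (ℓ / 2)))
      = (Real.cosh (ℓ / 2))⁻¹ := by
    rw [Real.exp_zero]; field_simp; norm_num
  rw [e, Real.log_inv]
  apply neg_le_neg
  rw [Real.le_log_iff_exp_le hk, Real.cosh_eq]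
  have h5 : Real.exp (C + Real.log 2) ≤ Real.exp (ℓ / 2) :=
    Real.exp_le_exp.2 (by linarith [le_abs_self C])
  rw [Real.exp_add, Real.exp_log (by norm_num)] at h5
  linarith [Real.exp_pos (-(ℓ / 2))]
end
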